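/- Let H be a complex Hilbert space, M a von Neumann algebra acting on H, and ξ₀ a cyclic and separating vector for M. If ζ ∈ P♯ and ξ₀ − ζ ∈ P♯, then there exists a ∈ M with 0 ≤ a ≤ 1 such that ζ = a ξ₀. -/

import Mathlib

open scoped InnerProductSpace
open Filter

variable {H : Type*} [NormedAddCommGroup H] [InnerProductSpace ℂ H] [CompleteSpace H]

/-- The positive cone `P♯`: the closure in `H` of `{a ξ₀ : a ∈ M, a positive}`. -/
def sharpCone (M : VonNeumannAlgebra H) (ξ₀ : H) : Set H :=
  closure {ζ : H | ∃ a : H →L[ℂ] H, a ∈ M ∧ a.IsPositive ∧ a ξ₀ = ζ}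

/-- `ξ₀` is a cyclic vector for `M`: the linear span of `{x ξ₀ : x ∈ M}` is dense in `H`. -/
def IsCyclicVector (M : VonNeumannAlgebra H) (ξ₀ : H) : Prop :=
  Dense ((Submodule.span ℂ ((fun x : H →L[ℂ] H => x ξ₀) '' (M : Set (H →L[ℂ] H)))) : Set H)

/-- `ξ₀` is a separating vector for `M`: `x ∈ M` and `x ξ₀ = 0` imply `x = 0`. -/
def IsSeparatingVector (M : VonNeumannAlgebra H) (ξ₀ : H) : Prop :=
  ∀ x : H →L[ℂ] H, x ∈ M → x ξ₀ = 0 → x = 0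

/-!
For `ζ` and `ξ₀ - ζ` in `P♯` and `x` in the commutant `M'`, approximating by `a ξ₀` with `a ∈ M`
positive gives `0 ≤ ⟪x ξ₀, x ζ⟫ ≤ ⟪x ξ₀, x ξ₀⟫`. Cauchy-Schwarz for the positive form
`(y, x) ↦ ⟪y ξ₀, x ζ⟫` on `M'` then bounds `|⟪y ξ₀, x ζ⟫|` by `‖y ξ₀‖ ‖x ξ₀‖`. As `ξ₀` is
separating for `M`, the orbit `M' ξ₀` is dense, so `x ξ₀ ↦ x ζ` extends to a positive contraction
`a` of `H`, which commutes with `M'` by construction and hence lies in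
the double commutant, which is `M`.
-/

section SesquilinearForm

open scoped ComplexOrder

theorem isSymm_of_isNonneg {V : Type*} [AddCommGroup V] [Module ℂ V] {B : V →ₗ⋆[ℂ] V →ₗ[ℂ] ℂ}
    (hB : B.IsNonneg) : B.IsSymm := by
  have im_self (v : V) : (B v v).im = 0 := (Complex.nonneg_iff.1 (hB.nonneg v)).2.symm
  have im_add_eq_zero (u v : V) : (B u v).im + (B v u).im = 0 := by
    have h := im_self (u + v)
    rw [map_add, map_add, LinearMap.add_apply, LinearMap.add_apply] at h
    simpa only [Complex.add_im, im_self, zero_add, add_zero, add_comm] using h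
  refine ⟨fun u v => Complex.ext ?_ ?_⟩
  · have h := im_add_eq_zero u (Complex.I • v)
    rw [map_smul, B.map_smulₛₗ₂, Complex.conj_I, smul_eq_mul, smul_eq_mul, neg_mul,
      Complex.neg_im, Complex.I_mul_im, Complex.I_mul_im] at h
    rw [Complex.conj_re]
    linarith
  · rw [Complex.conj_im]
    linarith [im_add_eq_zero u v]

theorem norm_apply_sq_le_of_isPosSemidef {𝕜 V : Type*} [RCLike 𝕜] [AddCommGroup V] [Module 𝕜 V]
    {B : V →ₗ⋆[𝕜] V →ₗ[𝕜] 𝕜} (hB : B.IsPosSemidef) (u v : V) :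
    ‖B u v‖ ^ 2 ≤ RCLike.re (B u u) * RCLike.re (B v v) := by
  let core : PreInnerProductSpace.Core 𝕜 V :=
    { inner u v := B u v
      conj_inner_symm u v := hB.isSymm.eq v u
      re_inner_nonneg v := (RCLike.nonneg_iff.1 (hB.nonneg v)).1
      add_left := B.map_add₂
      smul_left u v r := B.map_smulₛₗ₂ r u v }
  have h : ‖B u v‖ * ‖B v u‖ ≤ RCLike.re (B u u) * RCLike.re (B v v) :=
    @InnerProductSpace.Core.inner_mul_inner_self_le 𝕜 V _ _ _ core u v
  rwa [← hB.isSymm.eq u v, RCLike.norm_conj, ← sq] at h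

end SesquilinearForm

section DenseRange

open scoped ComplexOrder

variable {E : Type*} [NormedAddCommGroup E] [InnerProductSpace ℂ E]

theorem isPositive_of_denseRange_of_inner_nonneg {ι : Type*} {g : ι → E} (hg : DenseRange g)
    {T : E →L[ℂ] E} (hT : ∀ i, 0 ≤ ⟪g i, T (g i)⟫_ℂ) : T.IsPositive := by
  have inner_right_nonneg (v : E) : 0 ≤ ⟪v, T v⟫_ℂ :=
    hg.induction_on v (isClosed_le (by fun_prop) (by fun_prop)) hT
  rw [ContinuousLinearMap.isPositive_iff_complex]
  intro v
  have inner_left_nonneg : 0 ≤ ⟪T v, v⟫_ℂ := by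
    rw [← inner_conj_symm]
    exact star_nonneg_iff.2 (inner_right_nonneg v)
  exact ⟨(Complex.eq_re_of_ofReal_le inner_left_nonneg).symm,
    (Complex.nonneg_iff.1 inner_left_nonneg).1⟩

variable {V : Type*} [AddCommGroup V] [Module ℂ V] {f g : V →ₗ[ℂ] E}

theorem norm_inner_le_of_inner_le_inner_self (hf : ∀ v, 0 ≤ ⟪g v, f v⟫_ℂ)
    (hfg : ∀ v, ⟪g v, f v⟫_ℂ ≤ ⟪g v, g v⟫_ℂ) (u v : V) :
    ‖⟪g u, f v⟫_ℂ‖ ≤ ‖g u‖ * ‖g v‖ := by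
  let B : V →ₗ⋆[ℂ] V →ₗ[ℂ] ℂ := ((innerₛₗ ℂ).compl₂ f).comp g
  have hB : B.IsNonneg := ⟨hf⟩
  have re_le (w : V) : RCLike.re (B w w) ≤ ‖g w‖ ^ 2 :=
    (RCLike.re_le_re (hfg w)).trans_eq (inner_self_eq_norm_sq (g w))
  refine le_of_sq_le_sq ?_ (by positivity)
  calc ‖B u v‖ ^ 2
      ≤ RCLike.re (B u u) * RCLike.re (B v v) :=
        norm_apply_sq_le_of_isPosSemidef ⟨isSymm_of_isNonneg hB, hB⟩ u v
    _ ≤ ‖g u‖ ^ 2 * ‖g v‖ ^ 2 :=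
        mul_le_mul (re_le u) (re_le v) (RCLike.nonneg_iff.1 (hf v)).1 (by positivity)
    _ = (‖g u‖ * ‖g v‖) ^ 2 := (mul_pow _ _ _).symm

theorem norm_apply_le_of_inner_le_inner_self (hg : DenseRange g) (hf : ∀ v, 0 ≤ ⟪g v, f v⟫_ℂ)
    (hfg : ∀ v, ⟪g v, f v⟫_ℂ ≤ ⟪g v, g v⟫_ℂ) (v : V) : ‖f v‖ ≤ ‖g v‖ := by
  have norm_inner_le (w : E) : ‖⟪w, f v⟫_ℂ‖ ≤ ‖w‖ * ‖g v‖ :=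
    hg.induction_on w (isClosed_le (by fun_prop) (by fun_prop))
      fun u => norm_inner_le_of_inner_le_inner_self hf hfg u v
  rw [← innerSL_apply_norm ℂ (f v)]
  refine ContinuousLinearMap.opNorm_le_bound _ (norm_nonneg _) fun w => ?_
  rw [innerSL_apply_apply, norm_inner_symm, mul_comm]
  exact norm_inner_le w

theorem exists_isPositive_of_inner_le_inner_self [CompleteSpace E] (hg : DenseRange g)
    (hf : ∀ v, 0 ≤ ⟪g v, f v⟫_ℂ) (hfg : ∀ v, ⟪g v, f v⟫_ℂ ≤ ⟪g v, g v⟫_ℂ) :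
    ∃ T : E →L[ℂ] E, T.IsPositive ∧ (1 - T).IsPositive ∧ ∀ v, T (g v) = f v := by
  have hT (v : V) : f.extendOfNorm g (g v) = f v :=
    LinearMap.extendOfNorm_eq hg
      ⟨1, fun v => by simpa using norm_apply_le_of_inner_le_inner_self hg hf hfg v⟩ v
  refine ⟨f.extendOfNorm g, isPositive_of_denseRange_of_inner_nonneg hg fun v => ?_,
    isPositive_of_denseRange_of_inner_nonneg hg fun v => ?_, hT⟩
  · rw [hT]
    exact hf v
  · rw [sub_apply, one_apply_eq_self, hT, inner_sub_right]
    exact sub_nonneg.2 (hfg v)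

end DenseRange

section Orbit

/-- The orbit map `x ↦ x ξ` of a vector `ξ` under a von Neumann algebra, as a linear map
whose dense range expresses cyclicity of `ξ`. Its domain is the underlying star subalgebra, which
carries the module structure. -/
def orbitMap (M : VonNeumannAlgebra H) (ξ : H) : M.toStarSubalgebra →ₗ[ℂ] H where
  toFun x := (x : H →L[ℂ] H) ξ
  map_add' _ _ := rfl
  map_smul' _ _ := rfl

variable {M : VonNeumannAlgebra H} {ξ : H}

theorem isCyclicVector_iff_denseRange_orbitMap :
    IsCyclicVector M ξ ↔ DenseRange (orbitMap M ξ) := by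
  have h : (fun x : H →L[ℂ] H => x ξ) '' M = (orbitMap M ξ).range := by
    ext v
    simp [orbitMap]
  rw [IsCyclicVector, h, Submodule.span_eq, LinearMap.coe_range, DenseRange]

theorem range_orbitMap_mem_invtSubmodule {y : H →L[ℂ] H} (hy : y ∈ M) :
    (orbitMap M ξ).range ∈ Module.End.invtSubmodule (y : H →ₗ[ℂ] H) := by
  rintro _ ⟨x, rfl⟩
  exact ⟨⟨y, hy⟩ * x, rfl⟩

theorem starProjection_closure_orbit_commutant_mem (M : VonNeumannAlgebra H) (ξ : H) :
    (orbitMap M.commutant ξ).range.topologicalClosure.starProjection ∈ M := by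
  refine (VonNeumannAlgebra.IsStarProjection.mem_iff isStarProjection_starProjection M).2
    fun y hy => ?_
  rw [Submodule.range_starProjection]
  exact Submodule.topologicalClosure_mem_invtSubmodule (range_orbitMap_mem_invtSubmodule hy)

theorem IsSeparatingVector.isCyclicVector_commutant (hξ : IsSeparatingVector M ξ) :
    IsCyclicVector M.commutant ξ := by
  let K := (orbitMap M.commutant ξ).range.topologicalClosure
  have ξ_mem : ξ ∈ K := Submodule.le_topologicalClosure _ ⟨1, rfl⟩
  have starProjection_eq_one : K.starProjection = 1 := by
    refine sub_eq_zero.1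
      (hξ _ (sub_mem (starProjection_closure_orbit_commutant_mem M ξ) (one_mem M)) ?_)
    rw [sub_apply, Submodule.starProjection_eq_self_iff.2 ξ_mem, one_apply_eq_self, sub_self]
  rw [isCyclicVector_iff_denseRange_orbitMap]
  intro v
  change v ∈ K
  rw [← Submodule.starProjection_eq_self_iff, starProjection_eq_one, one_apply_eq_self]

theorem mem_of_apply_orbit_commutant_eq (hξ : IsCyclicVector M.commutant ξ) {ζ : H}
    {a : H →L[ℂ] H} (ha : ∀ x ∈ M.commutant, a (x ξ) = x ζ) : a ∈ M := by
  rw [← M.commutant_commutant, VonNeumannAlgebra.mem_commutant_iff]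
  intro y hy
  ext v
  refine (isCyclicVector_iff_denseRange_orbitMap.1 hξ).induction_on v
    (isClosed_eq (by fun_prop) (by fun_prop)) ?_
  rintro ⟨x, hx⟩
  calc y (a (x ξ)) = (y * x) ζ := congrArg y (ha x hx)
    _ = a (y (x ξ)) := (ha (y * x) (mul_mem hy hx)).symm

end Orbit

section SharpCone

open scoped ComplexOrder

variable {M : VonNeumannAlgebra H} {ξ₀ ζ : H}

theorem inner_apply_nonneg_of_mem_sharpCone (hζ : ζ ∈ sharpCone M ξ₀) {x : H →L[ℂ] H}
    (hx : x ∈ M.commutant) : 0 ≤ ⟪x ξ₀, x ζ⟫_ℂ := by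
  refine closure_minimal (t := {ζ | 0 ≤ ⟪x ξ₀, x ζ⟫_ℂ}) ?_
    (isClosed_le (by fun_prop) (by fun_prop)) hζ
  rintro _ ⟨a, ha, ha_pos, rfl⟩
  have x_comm_a : x (a ξ₀) = a (x ξ₀) :=
    (DFunLike.congr_fun (VonNeumannAlgebra.mem_commutant_iff.1 hx a ha) ξ₀).symm
  rw [Set.mem_ofPred_eq, x_comm_a]
  exact ha_pos.inner_nonneg_right _

theorem inner_apply_le_of_sub_mem_sharpCone (hζ : ξ₀ - ζ ∈ sharpCone M ξ₀) {x : H →L[ℂ] H}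
    (hx : x ∈ M.commutant) : ⟪x ξ₀, x ζ⟫_ℂ ≤ ⟪x ξ₀, x ξ₀⟫_ℂ := by
  rw [← sub_nonneg, ← inner_sub_right, ← map_sub]
  exact inner_apply_nonneg_of_mem_sharpCone hζ hx

end SharpCone

theorem stmt13_general (M : VonNeumannAlgebra H) (ξ₀ : H) (hsep : IsSeparatingVector M ξ₀)
    (ζ : H) (hζ : ζ ∈ sharpCone M ξ₀) (hζ' : ξ₀ - ζ ∈ sharpCone M ξ₀) :
    ∃ a : H →L[ℂ] H, a ∈ M ∧ a.IsPositive ∧ (1 - a).IsPositive ∧ ζ = a ξ₀ := by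
  have hcyc' : IsCyclicVector M.commutant ξ₀ := hsep.isCyclicVector_commutant
  obtain ⟨a, ha_pos, ha_le, ha⟩ :=
    exists_isPositive_of_inner_le_inner_self (f := orbitMap M.commutant ζ)
      (isCyclicVector_iff_denseRange_orbitMap.1 hcyc')
      (fun x => inner_apply_nonneg_of_mem_sharpCone hζ x.2)
      (fun x => inner_apply_le_of_sub_mem_sharpCone hζ' x.2)
  have ha_mem : a ∈ M := mem_of_apply_orbit_commutant_eq hcyc' fun x hx => ha ⟨x, hx⟩
  exact ⟨a, ha_mem, ha_pos, ha_le, (ha 1).symm⟩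

/-- If `ζ ∈ P♯` and `ξ₀ - ζ ∈ P♯`, then `ζ = a ξ₀` for some `a ∈ M` with
`0 ≤ a ≤ 1`. -/
theorem stmt13 (M : VonNeumannAlgebra H) (ξ₀ : H)
    (hcyc : IsCyclicVector M ξ₀) (hsep : IsSeparatingVector M ξ₀)
    (ζ : H) (hζ : ζ ∈ sharpCone M ξ₀) (hζ' : ξ₀ - ζ ∈ sharpCone M ξ₀) :
    ∃ a : H →L[ℂ] H, a ∈ M ∧ a.IsPositive ∧ (1 - a).IsPositive ∧ ζ = a ξ₀ :=
  stmt13_general M ξ₀ hsep ζ hζ hζ'
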